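/- Let n ≥ 2, ε ∈ (0,1], τ ∈ (0,1], and let G = (V,E) be a finite simple graph with |E| ≥ 4(n−1)/(τ²ε⁴). Let P be the uniform probability vector on [n] (P i = 1/n for all i), and let T = |E|·(1+τε²)/n. Then the probability that the collision count Z satisfies Z ≥ T is at most 1/4. -/

import Mathlib

open Finset

open Classical in
/-- Probability of the event `A` under the product distribution on `Ω = V → Fin n`,
where the coordinates are independent and each has law the probability vector `P`. -/
noncomputable def pr {V : Type*} [Fintype V] [DecidableEq V] {n : ℕ}
    (P : Fin n → ℝ) (A : (V → Fin n) → Prop) : ℝ :=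
  ∑ ω : V → Fin n, if A ω then ∏ v, P (ω v) else 0

/-- Expectation of `f` under the product distribution. -/
noncomputable def ex {V : Type*} [Fintype V] [DecidableEq V] {n : ℕ}
    (P : Fin n → ℝ) (f : (V → Fin n) → ℝ) : ℝ :=
  ∑ ω : V → Fin n, (∏ v, P (ω v)) * f ω

/-- Variance of `f` under the product distribution. -/
noncomputable def var {V : Type*} [Fintype V] [DecidableEq V] {n : ℕ}
    (P : Fin n → ℝ) (f : (V → Fin n) → ℝ) : ℝ :=
  ex P (fun ω => (f ω - ex P f) ^ 2)

/-- The collision count `Z(ω) = ∑_{{u,v} ∈ E} 1[ω u = ω v]`. -/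
noncomputable def collisions {V : Type*} [Fintype V] [DecidableEq V] {n : ℕ}
    (G : SimpleGraph V) [DecidableRel G.Adj] (ω : V → Fin n) : ℝ :=
  ∑ e ∈ G.edgeFinset,
    Sym2.lift ⟨fun u v => if ω u = ω v then (1 : ℝ) else 0,
      fun u v => by by_cases h : ω u = ω v <;> simp [h, eq_comm]⟩ e

/-- The number of edges `|E|` of the comparison graph. -/
def edgeCount {V : Type*} [Fintype V] [DecidableEq V]
    (G : SimpleGraph V) [DecidableRel G.Adj] : ℕ :=
  G.edgeFinset.card

/-- The number of ordered 2-paths `c(G) = ∑_v d(v)·(d(v) − 1)`. -/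
def twoPaths {V : Type*} [Fintype V]
    (G : SimpleGraph V) [DecidableRel G.Adj] : ℕ :=
  ∑ v, G.degree v * (G.degree v - 1)

/-!
Write `Z` as a sum over the edges of collision indicators `X_e`. Under the uniform law, resampling
one endpoint of `e` makes `X_e` a Bernoulli variable of mean `1 / n` whatever the other coordinates
are. Two distinct edges always have an endpoint that lies on only one of them, so the `X_e` are
pairwise uncorrelated, even for edges that share a vertex. Hence `Z` has mean `|E| / n` and
variance `|E| (n - 1) / n²`, and Chebyshev's inequality bounds the probability of exceeding the
mean by the relative amount `δ = τ ε²`.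
-/

section ProductLaw

variable {V : Type*} [Fintype V] [DecidableEq V] {n : ℕ} {P : Fin n → ℝ}

lemma ex_add (f g : (V → Fin n) → ℝ) : ex P (fun ω => f ω + g ω) = ex P f + ex P g := by
  simp only [ex, mul_add, sum_add_distrib]

lemma ex_const_mul (a : ℝ) (f : (V → Fin n) → ℝ) : ex P (fun ω => a * f ω) = a * ex P f := by
  simp only [ex, mul_sum, mul_left_comm]

lemma ex_sum {ι : Type*} (s : Finset ι) (f : ι → (V → Fin n) → ℝ) :
    ex P (fun ω => ∑ i ∈ s, f i ω) = ∑ i ∈ s, ex P (f i) := by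
  simp only [ex, mul_sum]
  exact sum_comm

lemma ex_const (hP : ∑ i, P i = 1) (a : ℝ) : ex P (fun _ : V → Fin n => a) = a := by
  simp only [ex, ← sum_mul]
  rw [← Fintype.prod_sum, hP, prod_const_one, one_mul]

lemma var_eq_ex_sq_sub_sq_ex (hP : ∑ i, P i = 1) (f : (V → Fin n) → ℝ) :
    var P f = ex P (fun ω => f ω ^ 2) - ex P f ^ 2 := by
  have hexpand : (fun ω => (f ω - ex P f) ^ 2) =
      fun ω => f ω ^ 2 + (-2 * ex P f * f ω + ex P f ^ 2) := by
    funext ω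
    ring
  rw [var, hexpand, ex_add, ex_add, ex_const_mul, ex_const hP]
  ring

lemma var_sum_of_pairwise_uncorrelated (hP : ∑ i, P i = 1) {ι : Type*} {s : Finset ι}
    {f : ι → (V → Fin n) → ℝ}
    (hf : (s : Set ι).Pairwise fun i j => ex P (fun ω => f i ω * f j ω) = ex P (f i) * ex P (f j)) :
    var P (fun ω => ∑ i ∈ s, f i ω) = ∑ i ∈ s, var P (f i) := by
  simp only [var_eq_ex_sq_sub_sq_ex hP, sq, ex_sum, sum_mul_sum]
  rw [← sum_sub_distrib]
  refine sum_congr rfl fun i hi => ?_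
  rw [← sum_sub_distrib, sum_eq_single_of_mem i hi]
  exact fun j hj hji => sub_eq_zero.2 (hf hi hj hji.symm)

lemma pr_ex_add_le_le_var_div_sq (hP : ∀ i, 0 ≤ P i) (f : (V → Fin n) → ℝ) {t : ℝ} (ht : 0 < t) :
    pr P (fun ω => ex P f + t ≤ f ω) ≤ var P f / t ^ 2 := by
  rw [le_div_iff₀ (by positivity), pr, sum_mul, var]
  generalize ex P f = μ
  rw [ex]
  refine sum_le_sum fun ω _ => ?_
  have hweight : 0 ≤ ∏ v, P (ω v) := prod_nonneg fun v _ => hP (ω v)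
  split_ifs with hω
  · gcongr
    linarith
  · rw [zero_mul]
    positivity

lemma prod_comp_update_mul {α M : Type*} [CommMonoid M] (p : α → M) (ω : V → α) (u : V) (c : α) :
    (∏ v, p (Function.update ω u c v)) * p (ω u) = (∏ v, p (ω v)) * p c := by
  have hrest : ∏ v ∈ univ.erase u, p (Function.update ω u c v) = ∏ v ∈ univ.erase u, p (ω v) :=
    prod_congr rfl fun v hv => by rw [Function.update_of_ne (ne_of_mem_erase hv)]
  rw [← mul_prod_erase _ _ (mem_univ u), ← mul_prod_erase _ _ (mem_univ u), hrest,
    Function.update_self, mul_right_comm, mul_comm (p c), mul_right_comm]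

lemma ex_eq_ex_sum_update (hP : ∑ i, P i = 1) (u : V) (f : (V → Fin n) → ℝ) :
    ex P f = ex P (fun ω => ∑ c, P c * f (Function.update ω u c)) := by
  -- Exchanging the coordinate `ω u` with an independent sample `c` preserves the product law.
  let swap (p : (V → Fin n) × Fin n) : (V → Fin n) × Fin n := (Function.update p.1 u p.2, p.1 u)
  have hswap : Function.Involutive swap := fun p => by simp [swap]
  let weight (p : (V → Fin n) × Fin n) : ℝ := (∏ v, P (p.1 v)) * P p.2
  have weight_swap (p) : weight (swap p) = weight p := prod_comp_update_mul P p.1 u p.2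
  calc
    ex P f = ∑ p, weight p * f p.1 := by
      simp only [weight, ex, Fintype.sum_prod_type, ← sum_mul, ← mul_sum, hP, mul_one]
    _ = ∑ p, weight (swap p) * f (swap p).1 :=
      (hswap.bijective.sum_comp fun p => weight p * f p.1).symm
    _ = ∑ p, weight p * f (Function.update p.1 u p.2) := by simp only [weight_swap, swap]
    _ = ex P (fun ω => ∑ c, P c * f (Function.update ω u c)) := by
      simp only [weight, ex, Fintype.sum_prod_type, mul_sum, mul_assoc]

end ProductLaw

section CollisionIndicator

variable {V α : Type*} [DecidableEq α]

/-- The indicator `X_e` that the endpoints of `e` receive the same value under `ω`: that is, the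
image of `e` under `ω` is a loop. -/
noncomputable def collisionIndicator (e : Sym2 V) (ω : V → α) : ℝ :=
  if (e.map ω).IsDiag then 1 else 0

lemma collisionIndicator_mk (u v : V) (ω : V → α) :
    collisionIndicator s(u, v) ω = if ω u = ω v then 1 else 0 := by
  simp [collisionIndicator]

lemma collisionIndicator_sq (e : Sym2 V) (ω : V → α) :
    collisionIndicator e ω ^ 2 = collisionIndicator e ω := by
  simp [collisionIndicator]

lemma dependsOn_collisionIndicator (e : Sym2 V) :
    DependsOn (collisionIndicator (α := α) e) (e : Set V) := fun ω ω' h => by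
  rw [collisionIndicator, collisionIndicator, Sym2.map_congr h]

lemma collisions_eq_sum_collisionIndicator [Fintype V] [DecidableEq V] {n : ℕ}
    (G : SimpleGraph V) [DecidableRel G.Adj] (ω : V → Fin n) :
    collisions G ω = ∑ e ∈ G.edgeFinset, collisionIndicator e ω :=
  sum_congr rfl fun e _ => e.ind fun u v => (collisionIndicator_mk u v ω).symm

lemma exists_mem_notMem_of_ne_of_not_isDiag {e f : Sym2 V} (he : ¬ e.IsDiag) (hef : e ≠ f) :
    ∃ u ∈ e, u ∉ f := by
  induction e with
  | _ a b =>
    by_contra! hsub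
    have hf : f = s(a, b) := (Sym2.mem_and_mem_iff (by simpa using he)).1
      ⟨hsub a (Sym2.mem_mk_left a b), hsub b (Sym2.mem_mk_right a b)⟩
    exact hef hf.symm

lemma ex_collisionIndicator_mul [Fintype V] [DecidableEq V] {n : ℕ} {P : Fin n → ℝ}
    (hP : ∑ i, P i = 1) {u v : V} (huv : u ≠ v) {g : (V → Fin n) → ℝ} (hg : DependsOn g {u}ᶜ) :
    ex P (fun ω => collisionIndicator s(u, v) ω * g ω) = ex P (fun ω => P (ω v) * g ω) := by
  have hupdate (ω : V → Fin n) (c : Fin n) : g (Function.update ω u c) = g ω :=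
    hg fun w hw => Function.update_of_ne hw c ω
  rw [ex_eq_ex_sum_update hP u]
  simp [collisionIndicator_mk, hupdate, huv.symm]

end CollisionIndicator

section Uniform

variable {V : Type*} [Fintype V] [DecidableEq V] {n : ℕ}

/-- The uniform probability vector on `Fin n`, reducible so that it matches the explicit function
in `uniform_case`. -/
noncomputable abbrev uniformVector (n : ℕ) : Fin n → ℝ := fun _ => 1 / n

lemma sum_uniformVector [NeZero n] : ∑ i, uniformVector n i = 1 := by
  simp

lemma ex_uniformVector_collisionIndicator_mul [NeZero n] {e : Sym2 V} (he : ¬ e.IsDiag) {u : V}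
    (hu : u ∈ e) {g : (V → Fin n) → ℝ} (hg : DependsOn g {u}ᶜ) :
    ex (uniformVector n) (fun ω => collisionIndicator e ω * g ω) =
      1 / n * ex (uniformVector n) g := by
  obtain ⟨v, rfl⟩ := Sym2.mem_iff_exists.1 hu
  rw [ex_collisionIndicator_mul sum_uniformVector (by simpa using he) hg, ex_const_mul]

lemma ex_uniformVector_collisionIndicator [NeZero n] {e : Sym2 V} (he : ¬ e.IsDiag) :
    ex (uniformVector n) (collisionIndicator e) = 1 / n := by
  have hresample := ex_uniformVector_collisionIndicator_mul (n := n) he e.out_fst_mem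
    ((dependsOn_const (1 : ℝ)).mono (Set.empty_subset _))
  simpa only [mul_one, ex_const sum_uniformVector] using hresample

lemma ex_uniformVector_collisionIndicator_mul_collisionIndicator [NeZero n] {e f : Sym2 V}
    (he : ¬ e.IsDiag) (hf : ¬ f.IsDiag) (hef : e ≠ f) :
    ex (uniformVector n) (fun ω => collisionIndicator e ω * collisionIndicator f ω) =
      ex (uniformVector n) (collisionIndicator e) *
        ex (uniformVector n) (collisionIndicator f) := by
  obtain ⟨u, hue, huf⟩ := exists_mem_notMem_of_ne_of_not_isDiag he hef
  have hfu : (f : Set V) ⊆ {u}ᶜ := Set.subset_compl_singleton_iff.2 huf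
  rw [ex_uniformVector_collisionIndicator_mul he hue ((dependsOn_collisionIndicator f).mono hfu),
    ex_uniformVector_collisionIndicator he, ex_uniformVector_collisionIndicator hf]

lemma var_uniformVector_collisionIndicator [NeZero n] {e : Sym2 V} (he : ¬ e.IsDiag) :
    var (uniformVector n) (collisionIndicator e) = ((n : ℝ) - 1) / n ^ 2 := by
  simp only [var_eq_ex_sq_sub_sq_ex sum_uniformVector, collisionIndicator_sq]
  rw [ex_uniformVector_collisionIndicator he]
  field_simp

variable (G : SimpleGraph V) [DecidableRel G.Adj]

lemma ex_uniformVector_collisions [NeZero n] :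
    ex (uniformVector n) (collisions G) = edgeCount G / n := by
  simp only [funext (collisions_eq_sum_collisionIndicator G), ex_sum]
  rw [sum_congr rfl fun e he => ex_uniformVector_collisionIndicator
    (G.not_isDiag_of_mem_edgeFinset he), sum_const, nsmul_eq_mul, mul_one_div, edgeCount]

lemma var_uniformVector_collisions [NeZero n] :
    var (uniformVector n) (collisions G) = edgeCount G * (((n : ℝ) - 1) / n ^ 2) := by
  have hloopless {e : Sym2 V} (he : e ∈ G.edgeFinset) : ¬ e.IsDiag :=
    G.not_isDiag_of_mem_edgeFinset he
  rw [funext (collisions_eq_sum_collisionIndicator G),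
    var_sum_of_pairwise_uncorrelated sum_uniformVector fun e he f hf hef =>
      ex_uniformVector_collisionIndicator_mul_collisionIndicator (hloopless he) (hloopless hf) hef,
    sum_congr rfl fun e he => var_uniformVector_collisionIndicator (hloopless he),
    sum_const, nsmul_eq_mul, edgeCount]

lemma pr_uniformVector_le_collisions_le [NeZero n] (hG : 0 < edgeCount G) {δ : ℝ} (hδ : 0 < δ) :
    pr (uniformVector n) (fun ω : V → Fin n => (edgeCount G : ℝ) * (1 + δ) / n ≤ collisions G ω) ≤
      ((n : ℝ) - 1) / (edgeCount G * δ ^ 2) := by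
  have hn : 0 < (n : ℝ) := Nat.cast_pos.2 (NeZero.pos n)
  have hthreshold : (edgeCount G : ℝ) * (1 + δ) / n =
      ex (uniformVector n) (collisions G) + edgeCount G * δ / n := by
    rw [ex_uniformVector_collisions]
    ring
  rw [hthreshold]
  calc
    _ ≤ var (uniformVector n) (collisions G) / (edgeCount G * δ / n) ^ 2 :=
      pr_ex_add_le_le_var_div_sq (fun _ => by positivity) _ (by positivity)
    _ = ((n : ℝ) - 1) / (edgeCount G * δ ^ 2) := by
      rw [var_uniformVector_collisions]
      field_simp

theorem uniform_case_general (hn : 2 ≤ n) {δ η : ℝ} (hδ : 0 < δ) (hη : 0 < η)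
    (hE : ((n : ℝ) - 1) / (η * δ ^ 2) ≤ edgeCount G) :
    pr (uniformVector n) (fun ω : V → Fin n => (edgeCount G : ℝ) * (1 + δ) / n ≤ collisions G ω) ≤
      η := by
  have : NeZero n := ⟨by lia⟩
  have hn1 : 0 < (n : ℝ) - 1 := sub_pos.2 (Nat.one_lt_cast.2 hn)
  have hG : 0 < (edgeCount G : ℝ) := lt_of_lt_of_le (by positivity) hE
  refine (pr_uniformVector_le_collisions_le G (Nat.cast_pos.1 hG) hδ).trans ?_
  rw [div_le_iff₀ (by positivity)] at hE ⊢
  linarith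

end Uniform

/-- On the uniform distribution: if `|E| ≥ 4(n−1)/(τ²ε⁴)` then the probability that the
collision count is at least the threshold `T = |E|·(1+τε²)/n` is at most `1/4`. -/
theorem uniform_case {V : Type*} [Fintype V] [DecidableEq V] (n : ℕ) (hn : 2 ≤ n)
    (ε τ : ℝ) (hε0 : 0 < ε) (hε1 : ε ≤ 1) (hτ0 : 0 < τ) (hτ1 : τ ≤ 1)
    (G : SimpleGraph V) [DecidableRel G.Adj]
    (hE : 4 * ((n : ℝ) - 1) / (τ ^ 2 * ε ^ 4) ≤ (edgeCount G : ℝ))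
    (T : ℝ) (hT : T = (edgeCount G : ℝ) * (1 + τ * ε ^ 2) / n) :
    pr (fun _ : Fin n => (1 : ℝ) / n)
      (fun ω : V → Fin n => T ≤ collisions G ω) ≤ 1 / 4 := by
  subst hT
  exact uniform_case_general G hn (by positivity) (by norm_num)
    (le_of_eq_of_le (by field_simp) hE)
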